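/- Let ι be a finite nonempty index set and for each k ∈ ι let R_k be a finite nontrivial commutative local principal ideal ring, and let R = ∏_{k ∈ ι} R_k be the product ring. Then the group of affine permutations of R contains a cross-commuting nonabelian square if and only if there exist distinct indices i ≠ j in ι such that the cardinality of R_i is greater than 2 and the cardinality of R_j is greater than 2 (equivalently, at least two of the factors R_k are not isomorphic to the field with two elements). -/

import Mathlib

/-- Two self-maps of a type commute under composition. -/
def MapsCommute {α : Type*} (f g : α → α) : Prop :=
  f ∘ g = g ∘ f

/-- `f : R → R` is an affine permutation: `x ↦ a·x + b` with `a` a unit of `R`. -/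
def IsAffinePerm {R : Type*} [CommRing R] (f : R → R) : Prop :=
  ∃ a : Rˣ, ∃ b : R, ∀ x, f x = (a : R) * x + b

/-- A cross-commuting nonabelian square exists in the affine permutation group of `R`. -/
def HasCrossCommutingNonabelianSquare (R : Type*) [CommRing R] : Prop :=
  ∃ F₀ F₁ G₀ G₁ : R → R,
    IsAffinePerm F₀ ∧ IsAffinePerm F₁ ∧ IsAffinePerm G₀ ∧ IsAffinePerm G₁ ∧
    MapsCommute F₀ G₀ ∧ MapsCommute F₀ G₁ ∧ MapsCommute F₁ G₀ ∧ MapsCommute F₁ G₁ ∧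
    ¬ MapsCommute F₀ F₁ ∧ ¬ MapsCommute G₀ G₁

theorem affine_commute_iff {R : Type*} [CommRing R] {f g : R → R} {a b c d : R}
    (hf : ∀ x, f x = a * x + b) (hg : ∀ x, g x = c * x + d) :
    MapsCommute f g ↔ (a - 1) * d = (c - 1) * b := by
  unfold MapsCommute
  constructor
  · intro h
    have h0 := congr_fun h 0
    simp only [Function.comp, hf, hg] at h0
    linear_combination h0
  · intro h
    funext x
    simp only [Function.comp, hf, hg]
    linear_combination h

theorem local_pir_dvd_total {R : Type*} [CommRing R] [IsLocalRing R] [IsPrincipalIdealRing R]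
    (a b : R) : a ∣ b ∨ b ∣ a := by
  obtain ⟨c, hc⟩ := (IsPrincipalIdealRing.principal (Ideal.span {a, b})).principal
  have hc' : Ideal.span {a, b} = Ideal.span {c} := hc
  have ha : a ∈ Ideal.span {c} := hc' ▸ Ideal.subset_span (by simp)
  have hb : b ∈ Ideal.span {c} := hc' ▸ Ideal.subset_span (by simp)
  have hcc : c ∈ Ideal.span {a, b} := hc' ▸ Ideal.subset_span (by simp)
  obtain ⟨a', rfl⟩ := Ideal.mem_span_singleton.1 ha
  obtain ⟨b', rfl⟩ := Ideal.mem_span_singleton.1 hb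
  obtain ⟨x, y, hxy⟩ := Ideal.mem_span_pair.1 hcc
  rcases IsLocalRing.isUnit_or_isUnit_one_sub_self (x * a' + y * b') with h | h
  · rcases IsLocalRing.isUnit_or_isUnit_of_isUnit_add h with h | h
    · left
      exact mul_dvd_mul_left c (isUnit_of_mul_isUnit_right h).dvd
    · right
      exact mul_dvd_mul_left c (isUnit_of_mul_isUnit_right h).dvd
  · have : c * (1 - (x * a' + y * b')) = 0 := by linear_combination -hxy
    have hc0 : c = 0 := (h.mul_left_eq_zero).1 this
    left; simp [hc0]


theorem chain_mul_zero {R : Type*} [CommRing R] (tot : ∀ a b : R, a ∣ b ∨ b ∣ a)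
    {u w v s : R} (h1 : w * v = 0) (h2 : u * s = 0) (h3 : u * w ≠ 0) :
    v * s = 0 := by
  rcases tot w s with ⟨t, rfl⟩ | ⟨t, rfl⟩
  · linear_combination t * h1
  · exact absurd (by linear_combination t * h2) h3

theorem no_square_aux {R : Type*} [CommRing R] (tot : ∀ a b : R, a ∣ b ∨ b ∣ a)
    {u0 b0 u1 b1 v0 d0 v1 d1 : R}
    (h00 : u0 * d0 = v0 * b0) (h01 : u0 * d1 = v1 * b0)
    (h10 : u1 * d0 = v0 * b1) (h11 : u1 * d1 = v1 * b1)
    (hb0 : u0 ∣ b0) (hu1 : u0 ∣ u1) (hb1 : u0 ∣ b1)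
    (hF : u0 * b1 ≠ u1 * b0) : v0 * d1 = v1 * d0 := by
  obtain ⟨β, rfl⟩ := hb0
  obtain ⟨μ, rfl⟩ := hu1
  obtain ⟨ν, rfl⟩ := hb1
  have hne : u0 * (u0 * (ν - β * μ)) ≠ 0 := fun h => hF (by linear_combination h)
  have e1 := chain_mul_zero tot (u := u0) (w := u0 * (ν - β * μ)) (v := v0) (s := d1 - β * v1)
    (by linear_combination μ * h00 - h10) (by linear_combination h01) hne
  have e2 := chain_mul_zero tot (u := u0) (w := u0 * (ν - β * μ)) (v := v1) (s := d0 - β * v0)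
    (by linear_combination μ * h01 - h11) (by linear_combination h00) hne
  linear_combination e1 - e2

theorem no_square_half {R : Type*} [CommRing R] (tot : ∀ a b : R, a ∣ b ∨ b ∣ a)
    {u0 b0 u1 b1 v0 d0 v1 d1 : R}
    (h00 : u0 * d0 = v0 * b0) (h01 : u0 * d1 = v1 * b0)
    (h10 : u1 * d0 = v0 * b1) (h11 : u1 * d1 = v1 * b1)
    (hy : u0 ∣ b0 ∧ u0 ∣ u1 ∧ u0 ∣ b1 ∨ b0 ∣ u0 ∧ b0 ∣ u1 ∧ b0 ∣ b1)
    (hF : u0 * b1 ≠ u1 * b0) : v0 * d1 = v1 * d0 := by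
  rcases hy with ⟨p, q, r⟩ | ⟨p, q, r⟩
  · exact no_square_aux tot h00 h01 h10 h11 p q r hF
  · have := no_square_aux tot (u0 := b0) (b0 := u0) (u1 := b1) (b1 := u1) (v0 := d0) (d0 := v0)
      (v1 := d1) (d1 := v1) (by linear_combination -h00) (by linear_combination -h01)
      (by linear_combination -h10) (by linear_combination -h11) p r q
      (fun h => hF (by linear_combination -h))
    linear_combination -this

theorem no_square {R : Type*} [CommRing R] (tot : ∀ a b : R, a ∣ b ∨ b ∣ a)
    {u0 b0 u1 b1 v0 d0 v1 d1 : R}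
    (h00 : u0 * d0 = v0 * b0) (h01 : u0 * d1 = v1 * b0)
    (h10 : u1 * d0 = v0 * b1) (h11 : u1 * d1 = v1 * b1)
    (hF : u0 * b1 ≠ u1 * b0) : v0 * d1 = v1 * d0 := by
  have key : (u0 ∣ b0 ∧ u0 ∣ u1 ∧ u0 ∣ b1 ∨ b0 ∣ u0 ∧ b0 ∣ u1 ∧ b0 ∣ b1) ∨
      (u1 ∣ b1 ∧ u1 ∣ u0 ∧ u1 ∣ b0 ∨ b1 ∣ u1 ∧ b1 ∣ u0 ∧ b1 ∣ b0) := by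
    have m : ∀ x y : R, ∃ z, (z = x ∨ z = y) ∧ z ∣ x ∧ z ∣ y := fun x y => by
      rcases tot x y with h | h
      · exact ⟨x, Or.inl rfl, dvd_rfl, h⟩
      · exact ⟨y, Or.inr rfl, h, dvd_rfl⟩
    obtain ⟨z, hz, z1, z2⟩ := m u0 b0
    obtain ⟨w, hw, w1, w2⟩ := m u1 b1
    rcases tot z w with h | h
    · have := h.trans w1
      have := h.trans w2
      left
      rcases hz with rfl | rfl <;> tauto
    · have := h.trans z1
      have := h.trans z2
      right
      rcases hw with rfl | rfl <;> tauto
  rcases key with k | k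
  · exact no_square_half tot h00 h01 h10 h11 k hF
  · exact no_square_half tot h10 h11 h00 h01 k (fun h => hF h.symm)

theorem exists_unit_ne_one {R : Type*} [CommRing R] [Finite R] [IsLocalRing R]
    (h : 2 < Nat.card R) : ∃ a : Rˣ, (a : R) ≠ 1 := by
  classical
  by_contra! hall
  have := Fintype.ofFinite R
  have hs : (Finset.univ : Finset R) ⊆ {0, 1} := by
    intro x _
    rcases IsLocalRing.isUnit_or_isUnit_one_sub_self x with ⟨u, hu⟩ | ⟨u, hu⟩
    · have := hall u
      simp [← hu, this]
    · have := hall u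
      have : x = 0 := by linear_combination hu - this
      simp [this]
  have := (Finset.card_le_card hs).trans Finset.card_le_two
  rw [Finset.card_univ, ← Nat.card_eq_fintype_card] at this
  omega

theorem unit_eq_one_of_card {R : Type*} [CommRing R] [Finite R] [Nontrivial R]
    (h : ¬ 2 < Nat.card R) (a : Rˣ) : (a : R) = 1 := by
  classical
  by_contra hne
  have := Fintype.ofFinite R
  have hc : ({0, 1, (a : R)} : Finset R).card = 3 :=
    Finset.card_eq_three.2 ⟨0, 1, a, zero_ne_one, a.ne_zero.symm, Ne.symm hne, rfl⟩
  have := Finset.card_le_univ ({0, 1, (a : R)} : Finset R)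
  rw [hc, ← Nat.card_eq_fintype_card] at this
  omega

/-- **Classification over finite commutative principal ideal rings (cardinality
version).** Let `R = ∏ k, R k` be a finite product of finite nontrivial commutative
local principal ideal rings. The affine group of `R` contains a cross-commuting
nonabelian square if and only if there are two distinct indices `i ≠ j` with
`|R i| > 2` and `|R j| > 2`, i.e. at least two local factors are not `𝔽₂`. -/
theorem pir_classification_card {ι : Type*} [Fintype ι] [Nonempty ι] (R : ι → Type*)
    [∀ k, CommRing (R k)] [∀ k, Finite (R k)] [∀ k, Nontrivial (R k)]
    [∀ k, IsLocalRing (R k)] [∀ k, IsPrincipalIdealRing (R k)] :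
    HasCrossCommutingNonabelianSquare (∀ k, R k) ↔
      ∃ i j : ι, i ≠ j ∧ 2 < Nat.card (R i) ∧ 2 < Nat.card (R j) := by
  classical
  constructor
  · rintro ⟨F₀, F₁, G₀, G₁, ⟨a0, b0, hF0⟩, ⟨a1, b1, hF1⟩, ⟨c0, d0, hG0⟩, ⟨c1, d1, hG1⟩,
      h00, h01, h10, h11, hF, hG⟩
    rw [affine_commute_iff hF0 hG0] at h00
    rw [affine_commute_iff hF0 hG1] at h01
    rw [affine_commute_iff hF1 hG0] at h10
    rw [affine_commute_iff hF1 hG1] at h11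
    rw [affine_commute_iff hF0 hF1] at hF
    rw [affine_commute_iff hG0 hG1] at hG
    obtain ⟨i, hi⟩ := Function.ne_iff.1 hF
    obtain ⟨j, hj⟩ := Function.ne_iff.1 hG
    have hu : ∀ (k : ι), ¬ 2 < Nat.card (R k) → ∀ a : (∀ k, R k)ˣ,
        (a : ∀ k, R k) k = 1 := fun k hk a =>
      unit_eq_one_of_card hk (Units.map (Pi.evalRingHom R k : (∀ k, R k) →* R k) a)
    refine ⟨i, j, ?_, ?_, ?_⟩
    · rintro rfl
      exact hj (no_square local_pir_dvd_total (congr_fun h00 i) (congr_fun h01 i)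
        (congr_fun h10 i) (congr_fun h11 i) hi)
    · by_contra hk
      exact hi (by simp [hu i hk])
    · by_contra hk
      exact hj (by simp [hu j hk])
  · rintro ⟨i, j, hij, hi, hj⟩
    obtain ⟨a, ha⟩ := exists_unit_ne_one hi
    obtain ⟨c, hc⟩ := exists_unit_ne_one hj
    let U : ∀ k, (R k)ˣ → (∀ k, R k)ˣ := fun k u =>
      MulEquiv.piUnits.symm (Function.update (1 : ∀ k, (R k)ˣ) k u)
    have hU : ∀ k u l, ((U k u : (∀ k, R k)ˣ) : ∀ k, R k) l =
        ((Function.update (1 : ∀ k, (R k)ˣ) k u l : (R l)ˣ) : R l) := fun k u l => rfl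
    have key : ∀ k l, k ≠ l → ∀ (u : (R k)ˣ) (y : R l),
        (((U k u : (∀ k, R k)ˣ) : ∀ k, R k) - 1) * Pi.single l y = 0 := by
      intro k l hkl u y
      funext m
      by_cases hm : m = l
      · subst hm
        simp [hU, Function.update_of_ne hkl.symm]
      · simp [Pi.single_eq_of_ne hm]
    have key2 : ∀ k (u : (R k)ˣ), (u : R k) ≠ 1 →
        (((U k u : (∀ k, R k)ˣ) : ∀ k, R k) - 1) * Pi.single k 1 ≠ 0 := by
      intro k u hne h
      have := congr_fun h k
      simp [hU, sub_eq_zero, hne] at this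
    have e1 : ∀ b x : (∀ k, R k), x + b = 1 * x + b := by intro b x; ring
    have e0 : ∀ a x : (∀ k, R k), a * x = a * x + 0 := by intro b x; ring
    refine ⟨fun x => U i a * x, fun x => x + Pi.single i 1, fun x => U j c * x,
      fun x => x + Pi.single j 1, ⟨U i a, 0, e0 _⟩, ⟨1, Pi.single i 1, e1 _⟩,
      ⟨U j c, 0, e0 _⟩, ⟨1, Pi.single j 1, e1 _⟩, ?_, ?_, ?_, ?_, ?_, ?_⟩
    · rw [affine_commute_iff (e0 _) (e0 _)]; simp
    · rw [affine_commute_iff (e0 _) (e1 _), key i j hij]; simp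
    · rw [affine_commute_iff (e1 _) (e0 _), key j i hij.symm]; simp
    · rw [affine_commute_iff (e1 _) (e1 _)]; simp
    · rw [affine_commute_iff (e0 _) (e1 _)]; simpa using key2 i a ha
    · rw [affine_commute_iff (e0 _) (e1 _)]; simpa using key2 j c hc
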